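/- arXiv:1606.04850 — 3 statements merged into one kernel-verified Lean document; each statement's English description precedes it below -/
import Mathlib

section
/- The series ∑_{n=0}^∞ ζ(2n)/((2n+1)·16^n) equals -(1/4)·log 2 - G/π, where G is Catalan's constant. -/
open Real

noncomputable def catalanConst : ℝ := ∑' n : ℕ, (-1) ^ n / (2 * (n : ℝ) + 1) ^ 2

namespace ZC
open MeasureTheory

lemma hs_congr {f g : ℕ → ℝ} {a b : ℝ} (h : HasSum f a) (e : ∀ n, g n = f n) (e' : b = a) :
    HasSum g b := by
  rw [e', show g = f from funext e]
  exact h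

/-- `x cot x`, continuously extended at `0`. -/
noncomputable def c (x : ℝ) : ℝ := cos x / sinc x

lemma sinc_ne {x : ℝ} (h0 : 0 ≤ x) (h1 : x < π) : sinc x ≠ 0 := by
  rcases eq_or_lt_of_le h0 with h | h
  · simp [← h]
  · rw [sinc_of_ne_zero h.ne']
    exact div_ne_zero (sin_pos_of_pos_of_lt_pi h h1).ne' h.ne'

lemma c_cont : ContinuousOn c (Set.Icc 0 (π / 2)) := by
  unfold c
  refine continuous_cos.continuousOn.div continuous_sinc.continuousOn ?_
  intro x hx
  exact sinc_ne hx.1 (by linarith [hx.2, pi_pos])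

lemma c_int {a : ℝ} (h0 : 0 ≤ a) (h : a ≤ π / 2) : IntervalIntegrable c volume 0 a := by
  apply ContinuousOn.intervalIntegrable
  rw [Set.uIcc_of_le h0]
  exact c_cont.mono (Set.Icc_subset_Icc le_rfl h)

lemma c_of_ne {x : ℝ} (h : x ≠ 0) : c x = x * cos x / sin x := by
  unfold c
  rw [sinc_of_ne_zero h, div_div_eq_mul_div, mul_comm]

lemma int_half : ∫ x in (0 : ℝ)..(π / 2), c x = π / 2 * log 2 := by
  have hp := pi_pos
  have h1 : IntervalIntegrable (fun x => log (sin x)) volume 0 (π / 2) :=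
    intervalIntegrable_log_sin
  have h2 := c_int (by positivity) (le_refl (π / 2))
  have h : ∫ x in (0 : ℝ)..(π / 2), (log (sin x) + c x) =
      (π / 2 * log (sin (π / 2))) - 0 * log (sin 0) := by
    apply intervalIntegral.integral_eq_sub_of_hasDerivAt_of_le
      (f := fun x => x * log (sin x)) (by positivity)
    · have : ContinuousOn (fun x => (sin x * log (sin x)) / sinc x) (Set.Icc 0 (π / 2)) := by
        refine (continuous_mul_log.comp continuous_sin).continuousOn.div
          continuous_sinc.continuousOn ?_
        intro x hx
        exact sinc_ne hx.1 (by linarith [hx.2, pi_pos])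
      refine this.congr ?_
      intro x hx
      rcases eq_or_lt_of_le hx.1 with h | h
      · simp [← h]
      · have hs := (sin_pos_of_pos_of_lt_pi h (by linarith [hx.2])).ne'
        have := h.ne'
        simp only [sinc_of_ne_zero h.ne']
        field_simp
    · intro x hx
      have hs := (sin_pos_of_pos_of_lt_pi hx.1 (by linarith [hx.2])).ne'
      have := (hasDerivAt_id x).mul ((hasDerivAt_sin x).log hs)
      have e : 1 * log (sin x) + id x * (cos x / sin x) = log (sin x) + c x := by
        rw [c_of_ne hx.1.ne', id]
        ring
      rw [e] at this
      exact this
    · exact h1.add h2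
  rw [intervalIntegral.integral_add h1 h2, integral_log_sin_zero_pi_div_two] at h
  simp at h
  linarith

lemma g_cont : Continuous (dslope arctan 0) := by
  rw [← continuousOn_univ, continuousOn_dslope Filter.univ_mem]
  exact ⟨continuous_arctan.continuousOn, differentiableAt_arctan 0⟩

lemma catalan_int : ∫ t in (0 : ℝ)..1, dslope arctan 0 t = catalanConst := by
  have hI : ∀ n : ℕ, ∫ t in (0 : ℝ)..1, t ^ (2 * n) / (2 * (n : ℝ) + 1) =
      1 / (2 * (n : ℝ) + 1) ^ 2 := by
    intro n
    rw [intervalIntegral.integral_div, integral_pow]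
    simp
    field_simp
  have hS : Summable (fun n : ℕ => 1 / (2 * (n : ℝ) + 1) ^ 2) := by
    have h := (summable_nat_add_iff 1).2 (Real.summable_one_div_nat_pow.2 one_lt_two)
    refine Summable.of_nonneg_of_le (fun n => by positivity) (fun n => ?_) h
    push_cast
    gcongr
    have : (0 : ℝ) ≤ n := by positivity
    linarith
  have key := hasSum_integral_of_summable_integral_norm
    (μ := volume.restrict (Set.Ioc (0 : ℝ) 1))
    (F := fun (n : ℕ) (t : ℝ) => (-1) ^ n * (t ^ (2 * n) / (2 * (n : ℝ) + 1))) ?_ ?_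
  · unfold catalanConst
    rw [intervalIntegral.integral_of_le zero_le_one]
    have e1 : ∫ t in Set.Ioc (0 : ℝ) 1, dslope arctan 0 t =
        ∫ t in Set.Ioc (0 : ℝ) 1,
          ∑' n : ℕ, (-1) ^ n * (t ^ (2 * n) / (2 * (n : ℝ) + 1)) := by
      rw [integral_Ioc_eq_integral_Ioo, integral_Ioc_eq_integral_Ioo]
      refine setIntegral_congr_fun measurableSet_Ioo ?_
      intro t ht
      have hn : ‖t‖ < 1 := by
        rw [Real.norm_eq_abs, abs_of_pos ht.1]; exact ht.2
      have := (hasSum_arctan hn).div_const t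
      have h0 := ht.1.ne'
      dsimp only
      rw [dslope_of_ne _ h0, slope_def_field, arctan_zero, sub_zero, sub_zero, ← this.tsum_eq]
      congr 1
      ext n
      push_cast
      rw [pow_succ]
      field_simp
    rw [e1, ← key.tsum_eq]
    congr 1
    ext n
    rw [← intervalIntegral.integral_of_le zero_le_one, intervalIntegral.integral_const_mul, hI]
    ring
  · intro n
    rw [← IntegrableOn, ← intervalIntegrable_iff_integrableOn_Ioc_of_le zero_le_one]
    apply Continuous.intervalIntegrable
    fun_prop
  · refine hS.congr ?_
    intro n
    rw [← hI, intervalIntegral.integral_of_le zero_le_one]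
    refine setIntegral_congr_fun measurableSet_Ioc ?_
    intro t ht
    have := ht.1.le
    have h2 : 0 ≤ t ^ (2 * n) / (2 * (n : ℝ) + 1) := by positivity
    simp only [norm_mul, norm_pow, norm_neg, norm_one, one_pow, one_mul]
    rw [Real.norm_of_nonneg h2]

lemma cos_ne {x : ℝ} (h0 : 0 ≤ x) (h1 : x ≤ π / 4) : cos x ≠ 0 :=
  (cos_pos_of_mem_Ioo ⟨by linarith [pi_pos], by linarith [pi_pos]⟩).ne'

lemma int_sum : ∫ x in (0 : ℝ)..(π / 4), (c x + x * tan x) = catalanConst := by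
  have hp : (0 : ℝ) ≤ π / 4 := by positivity
  have h := intervalIntegral.integral_comp_mul_deriv (a := 0) (b := π / 4) (f := tan)
    (f' := fun x => 1 / cos x ^ 2) (g := dslope arctan 0) ?_ ?_ g_cont
  · rw [tan_zero, tan_pi_div_four, catalan_int] at h
    rw [← h]
    apply intervalIntegral.integral_congr
    intro x hx
    rw [Set.uIcc_of_le hp] at hx
    have hc := cos_ne hx.1 hx.2
    rcases eq_or_lt_of_le hx.1 with h | h
    · simp [← h, c]
    · have hs := (sin_pos_of_pos_of_lt_pi h (by linarith [hx.2, pi_pos])).ne'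
      have ht : tan x ≠ 0 := by
        rw [tan_eq_sin_div_cos]; exact div_ne_zero hs hc
      dsimp only [Function.comp]
      rw [dslope_of_ne _ ht, slope_def_field, arctan_zero, sub_zero, sub_zero,
        arctan_tan (by linarith) (by linarith [hx.2, pi_pos]), c_of_ne h.ne', tan_eq_sin_div_cos]
      field_simp
      linarith [sin_sq_add_cos_sq x]
  · intro x hx
    rw [Set.uIcc_of_le hp] at hx
    exact hasDerivAt_tan (cos_ne hx.1 hx.2)
  · rw [Set.uIcc_of_le hp]
    refine continuousOn_const.div (by fun_prop) ?_
    intro x hx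
    exact pow_ne_zero _ (cos_ne hx.1 hx.2)

lemma int_diff : ∫ x in (0 : ℝ)..(π / 4), (c x - x * tan x) = π / 4 * log 2 := by
  have hp : (0 : ℝ) ≤ π / 4 := by positivity
  have h : ∫ x in (0 : ℝ)..(π / 4), (c x - x * tan x) = ∫ x in (0 : ℝ)..(π / 4), c (2 * x) := by
    apply intervalIntegral.integral_congr
    intro x hx
    rw [Set.uIcc_of_le hp] at hx
    have hc := cos_ne hx.1 hx.2
    rcases eq_or_lt_of_le hx.1 with h | h
    · simp [← h, c]
    · have hs := (sin_pos_of_pos_of_lt_pi h (by linarith [hx.2, pi_pos])).ne'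
      dsimp only
      rw [c_of_ne h.ne', c_of_ne (by positivity), tan_eq_sin_div_cos, sin_two_mul, cos_two_mul']
      field_simp
  rw [h, intervalIntegral.integral_comp_mul_left c two_ne_zero]
  rw [mul_zero, show 2 * (π / 4) = π / 2 by ring, int_half]
  simp
  ring

lemma int_c : ∫ x in (0 : ℝ)..(π / 4), c x = (catalanConst + π / 4 * log 2) / 2 := by
  have hp : (0 : ℝ) ≤ π / 4 := by positivity
  have h1 := c_int hp (by linarith)
  have h2 : IntervalIntegrable (fun x => x * tan x) volume 0 (π / 4) := by
    apply ContinuousOn.intervalIntegrable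
    rw [Set.uIcc_of_le hp]
    refine continuousOn_id.mul (continuousOn_tan.mono ?_)
    intro x hx
    exact cos_ne hx.1 hx.2
  have a := int_sum
  have b := int_diff
  rw [intervalIntegral.integral_add h1 h2] at a
  rw [intervalIntegral.integral_sub h1 h2] at b
  linarith

/-- `ζ(2n+2)` as a real number. -/
noncomputable def z (n : ℕ) : ℝ := ∑' k : ℕ, 1 / ((k : ℝ) + 1) ^ (2 * (n + 1))

lemma z_summable (n : ℕ) : Summable fun k : ℕ => 1 / ((k : ℝ) + 1) ^ (2 * (n + 1)) := by
  have h := (summable_nat_add_iff 1).2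
    (Real.summable_one_div_nat_pow (p := 2 * (n + 1)).2 (by omega))
  simpa using h

lemma zeta_eq (n : ℕ) : riemannZeta (2 * ((n + 1 : ℕ) : ℂ)) = (z n : ℂ) := by
  have h := zeta_nat_eq_tsum_of_gt_one (k := 2 * (n + 1)) (by omega)
  have h2 := (Real.summable_one_div_nat_pow (p := 2 * (n + 1)).2 (by omega))
  have h3 : ∑' k : ℕ, 1 / (k : ℝ) ^ (2 * (n + 1)) = z n := by
    rw [h2.tsum_eq_zero_add]
    simp [z]
  rw [← h3]
  push_cast at h ⊢
  exact h

lemma z_nonneg (n : ℕ) : 0 ≤ z n := tsum_nonneg fun k => by positivity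

lemma z_le (n : ℕ) : z n ≤ z 0 := by
  refine (z_summable n).tsum_le_tsum (fun k => ?_) (z_summable 0)
  have : (1 : ℝ) ≤ k + 1 := by linarith [(Nat.cast_nonneg k : (0 : ℝ) ≤ k)]
  gcongr <;> first | exact this | omega

lemma cot_sum {x : ℝ} (h0 : 0 < x) (h1 : x ≤ 1 / 4) :
    ∑' k : ℕ, x ^ 2 / (((k : ℝ) + 1) ^ 2 - x ^ 2) = (1 - c (π * x)) / 2 := by
  have hmem : (x : ℂ) ∈ Complex.integerComplement := by
    rintro ⟨m, hm⟩
    have hm' : (m : ℝ) = x := by exact_mod_cast hm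
    have a : (0 : ℝ) < m := by rw [hm']; exact h0
    have b : (m : ℝ) < 1 := by rw [hm']; linarith
    have a' : 0 < m := by exact_mod_cast a
    have b' : m < 1 := by exact_mod_cast b
    omega
  have h := cot_series_rep' hmem
  have h' : π * cot (π * x) - 1 / x = ∑' n : ℕ, (1 / (x - ((n : ℝ) + 1)) + 1 / (x + (n + 1))) := by
    apply Complex.ofReal_injective
    push_cast
    exact h
  have e : ∀ k : ℕ, x ^ 2 / (((k : ℝ) + 1) ^ 2 - x ^ 2) =
      (-x / 2) * (1 / (x - ((k : ℝ) + 1)) + 1 / (x + (k + 1))) := by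
    intro k
    have hk : (0 : ℝ) ≤ k := by positivity
    have a1 : x - ((k : ℝ) + 1) ≠ 0 := by intro h; linarith
    have a2 : x + ((k : ℝ) + 1) ≠ 0 := by positivity
    have a3 : ((k : ℝ) + 1) ^ 2 - x ^ 2 ≠ 0 := by
      have : ((k : ℝ) + 1) ^ 2 - x ^ 2 = -((x - ((k : ℝ) + 1)) * (x + ((k : ℝ) + 1))) := by ring
      rw [this]; exact neg_ne_zero.2 (mul_ne_zero a1 a2)
    field_simp
    ring
  simp_rw [e]
  rw [tsum_mul_left, ← h', c_of_ne (by positivity), cot_eq_cos_div_sin]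
  field_simp
  ring

lemma z_hasSum {x : ℝ} (h0 : 0 < x) (h1 : x ≤ 1 / 4) :
    HasSum (fun n : ℕ => z n * x ^ (2 * (n + 1))) ((1 - c (π * x)) / 2) := by
  have hk1 : ∀ k : ℕ, (1 : ℝ) ≤ k + 1 := fun k => by
    linarith [(Nat.cast_nonneg k : (0 : ℝ) ≤ k)]
  have hS : Summable (fun p : ℕ × ℕ => (x / ((p.2 : ℝ) + 1)) ^ (2 * (p.1 + 1))) := by
    have hg : Summable (fun n : ℕ => (1 / 16 : ℝ) ^ (n + 1)) :=
      (summable_nat_add_iff 1).2 (summable_geometric_of_lt_one (by norm_num) (by norm_num))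
    have := hg.mul_of_nonneg (z_summable 0) (fun n => by positivity) (fun n => by positivity)
    refine Summable.of_nonneg_of_le (fun p => by positivity) (fun p => ?_) this
    have hp := hk1 p.2
    rw [div_pow]
    have e1 : x ^ (2 * (p.1 + 1)) ≤ (1 / 16 : ℝ) ^ (p.1 + 1) := by
      rw [pow_mul]
      gcongr
      nlinarith
    have e2 : 1 / ((p.2 : ℝ) + 1) ^ (2 * (p.1 + 1)) ≤ 1 / ((p.2 : ℝ) + 1) ^ (2 * (0 + 1)) := by
      gcongr <;> first | exact hp | omega
    rw [div_eq_mul_one_div]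
    gcongr
  have hT := hS.hasSum
  have A : HasSum (fun n : ℕ => z n * x ^ (2 * (n + 1))) _ := hT.prod_fiberwise (fun n => by
    have := (z_summable n).hasSum.mul_right (x ^ (2 * (n + 1)))
    refine this.congr_fun ?_
    intro k
    simp only [div_pow]
    ring)
  convert A using 1
  rw [← cot_sum h0 h1]
  have hB := ((Equiv.prodComm ℕ ℕ).hasSum_iff.2 hT)
  refine (hB.prod_fiberwise (fun k => ?_)).tsum_eq
  have hk := hk1 k
  have hlt : (x / ((k : ℝ) + 1)) ^ 2 < 1 := by
    have : x / ((k : ℝ) + 1) < 1 := by rw [div_lt_one (by linarith)]; linarith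
    have h3 : 0 ≤ x / ((k : ℝ) + 1) := by positivity
    exact pow_lt_one₀ h3 this (by norm_num)
  have hgeo := (hasSum_geometric_of_lt_one (by positivity) hlt).mul_right ((x / ((k : ℝ) + 1)) ^ 2)
  have hd : ((k : ℝ) + 1) ^ 2 - x ^ 2 ≠ 0 := by nlinarith
  refine hs_congr hgeo (fun n => ?_) ?_
  · simp only [Function.comp, Equiv.prodComm_apply, Prod.swap]
    rw [pow_mul, pow_succ]
  · have : (1 - (x / ((k : ℝ) + 1)) ^ 2) ≠ 0 := by linarith
    field_simp

lemma z_int : HasSum (fun n : ℕ => z n / ((2 * ((n + 1 : ℕ) : ℝ) + 1) * 16 ^ (n + 1)))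
    (1 / 2 - (1 / 4) * log 2 - catalanConst / π) := by
  have hp := pi_pos
  have hg : Summable (fun n : ℕ => z 0 * (1 / 16 : ℝ) ^ (n + 1)) :=
    ((summable_nat_add_iff 1).2
      (summable_geometric_of_lt_one (by norm_num) (by norm_num))).mul_left _
  have key := intervalIntegral.hasSum_integral_of_dominated_convergence (μ := volume)
    (a := 0) (b := 1 / 4) (F := fun (n : ℕ) (x : ℝ) => z n * x ^ (2 * (n + 1)))
    (f := fun x => (1 - c (π * x)) / 2)
    (fun n _ => z 0 * (1 / 16 : ℝ) ^ (n + 1)) ?_ ?_ ?_ ?_ ?_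
  · have key4 := key.mul_left 4
    refine hs_congr key4 (fun n => ?_) ?_
    · rw [intervalIntegral.integral_const_mul, integral_pow]
      have : (1 / 4 : ℝ) ^ (2 * (n + 1) + 1) = 1 / (4 * 16 ^ (n + 1)) := by
        rw [pow_succ, pow_mul, div_pow, div_pow]; norm_num
      rw [this]
      push_cast
      simp
      field_simp
    · have hci : IntervalIntegrable (fun x => c (π * x)) volume 0 (1 / 4) := by
        apply ContinuousOn.intervalIntegrable
        rw [Set.uIcc_of_le (by norm_num)]
        refine c_cont.comp (by fun_prop) ?_
        intro x hx
        exact ⟨mul_nonneg hp.le hx.1, by nlinarith [hx.2]⟩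
      rw [intervalIntegral.integral_div,
        intervalIntegral.integral_sub intervalIntegrable_const hci,
        intervalIntegral.integral_comp_mul_left c hp.ne', mul_zero,
        show π * (1 / 4) = π / 4 by ring, int_c]
      simp
      field_simp
      ring
  · intro n
    exact (by fun_prop : Continuous fun x : ℝ => z n * x ^ (2 * (n + 1))).aestronglyMeasurable
  · intro n
    refine Filter.Eventually.of_forall fun x hx => ?_
    rw [Set.uIoc_of_le (by norm_num)] at hx
    have h0 := hx.1.le
    have := z_nonneg n
    rw [Real.norm_of_nonneg (by positivity)]
    have hle := z_le n
    have e1 : x ^ (2 * (n + 1)) ≤ (1 / 16 : ℝ) ^ (n + 1) := by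
      rw [pow_mul]
      gcongr
      nlinarith [hx.2]
    have := z_nonneg 0
    gcongr
  · exact Filter.Eventually.of_forall fun x _ => hg
  · exact intervalIntegrable_const
  · refine Filter.Eventually.of_forall fun x hx => ?_
    rw [Set.uIoc_of_le (by norm_num)] at hx
    exact z_hasSum hx.1 hx.2

end ZC

theorem stmt1 :
    ∑' n : ℕ, riemannZeta (2 * n) / ((2 * n + 1) * 16 ^ n) =
      ((-(1 / 4) * Real.log 2 - catalanConst / π : ℝ) : ℂ) := by
  have h := (Complex.hasSum_ofReal).2 ZC.z_int
  have h2 : HasSum (fun n : ℕ => riemannZeta (2 * ((n + 1 : ℕ) : ℂ)) /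
      ((2 * ((n + 1 : ℕ) : ℂ) + 1) * 16 ^ (n + 1)))
      ((1 / 2 - (1 / 4) * Real.log 2 - catalanConst / π : ℝ) : ℂ) := by
    convert h using 1
    ext n
    rw [ZC.zeta_eq]
    push_cast
    rfl
  have h3 := (hasSum_nat_add_iff
    (f := fun n : ℕ => riemannZeta (2 * n) / ((2 * n + 1) * 16 ^ n)) 1).1 h2
  rw [h3.tsum_eq]
  simp [riemannZeta_zero]
  ring
end

section
/- The series ∑_{n=0}^∞ ζ(2n)/((n+1)·4^n) equals -log 2 + 7ζ(3)/(2π²). -/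
open Real

/-- partial fractions of the cotangent, real form -/
lemma aux_cot (x : ℝ) (h0 : 0 < x) (h1 : x ≤ 1 / 2) :
    HasSum (fun k : ℕ => x ^ 2 / (((k : ℝ) + 1) ^ 2 - x ^ 2))
      (1 / 2 - (π * x) * cos (π * x) / sin (π * x) / 2) := by
  have hx : (x : ℂ) ∈ Complex.integerComplement := by
    rw [Complex.mem_integerComplement_iff]
    rintro ⟨n, hn⟩
    have hn' : (n : ℝ) = x := by exact_mod_cast hn
    have a : (0 : ℝ) < n := by linarith
    have b : (n : ℝ) < 1 := by linarith
    norm_cast at a b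
    omega
  have hs := (summable_cotTerm hx).hasSum
  have he := cot_series_rep' hx
  have hs2 : HasSum (fun n => cotTerm (x : ℂ) n) (π * Complex.cot (π * x) - 1 / x) := by
    rw [he]; exact hs
  have hs3 := hs2.mul_left (-(x : ℂ) / 2)
  rw [← Complex.hasSum_ofReal]
  convert! hs3 using 1
  · ext k
    have hk : (0 : ℝ) ≤ k := Nat.cast_nonneg k
    have e1 : (x : ℝ) - (k + 1) ≠ 0 := by intro h; linarith
    have e2 : (x : ℝ) + (k + 1) ≠ 0 := by intro h; linarith
    have e3 : ((k : ℝ) + 1) ^ 2 - x ^ 2 ≠ 0 := by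
      intro h
      have : (x - (k + 1)) * (x + (k + 1)) = 0 := by linarith
      rcases mul_eq_zero.1 this with h | h <;> contradiction
    have : x ^ 2 / (((k : ℝ) + 1) ^ 2 - x ^ 2) = (-x / 2) * (1 / (x - (k + 1)) + 1 / (x + (k + 1))) := by
      field_simp
      ring
    rw [cotTerm, this]
    push_cast
    ring
  · have hx0 : (x : ℂ) ≠ 0 := by exact_mod_cast h0.ne'
    push_cast
    rw [Complex.cot_eq_cos_div_sin]
    have : -(x : ℂ) / 2 * (π * (Complex.cos (π * x) / Complex.sin (π * x)) - 1 / x)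
      = (x * (1 / x)) / 2 - (π * x) * (Complex.cos (π * x) / Complex.sin (π * x)) / 2 := by ring
    rw [this, mul_one_div_cancel hx0]
    ring

noncomputable def zr (n : ℕ) : ℝ := ∑' k : ℕ, 1 / ((k : ℝ) + 1) ^ (2 * (n + 1))

lemma zr_summable (n : ℕ) : Summable (fun k : ℕ => 1 / ((k : ℝ) + 1) ^ (2 * (n + 1))) := by
  have := (summable_nat_add_iff 1).2 (Real.summable_one_div_nat_pow.2 (show 1 < 2 * (n + 1) by omega))
  simpa using this

lemma zr_nonneg (n : ℕ) : 0 ≤ zr n := tsum_nonneg fun k => by positivity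

lemma zr_le (n : ℕ) : zr n ≤ zr 0 := by
  refine (zr_summable n).tsum_le_tsum (fun k => ?_) (zr_summable 0)
  apply one_div_le_one_div_of_le (by positivity)
  apply pow_le_pow_right₀
  · have : (0 : ℝ) ≤ k := Nat.cast_nonneg k
    linarith
  · omega

lemma zr_zeta (n : ℕ) : ((zr n : ℝ) : ℂ) = riemannZeta (2 * ((n + 1 : ℕ) : ℂ)) := by
  have h := zeta_nat_eq_tsum_of_gt_one (k := 2 * (n + 1)) (by omega)
  have e : (2 * ((n + 1 : ℕ) : ℂ)) = ((2 * (n + 1) : ℕ) : ℂ) := by push_cast; ring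
  rw [e, h]
  have hs : Summable (fun k : ℕ => 1 / (k : ℝ) ^ (2 * (n + 1))) :=
    Real.summable_one_div_nat_pow.2 (by omega)
  have h2 := hs.tsum_eq_zero_add
  have : zr n = ∑' k : ℕ, 1 / (k : ℝ) ^ (2 * (n + 1)) := by
    rw [h2, zr]; simp
  rw [this]
  push_cast
  rfl

lemma zr_gen (x : ℝ) (h0 : 0 < x) (h1 : x ≤ 1 / 2) :
    HasSum (fun n : ℕ => zr n * x ^ (2 * (n + 1)))
      (1 / 2 - (π * x) * cos (π * x) / sin (π * x) / 2) := by
  have hc := aux_cot x h0 h1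
  set f : ℕ × ℕ → ℝ := fun p => (x ^ 2 / ((p.1 : ℝ) + 1) ^ 2) ^ (p.2 + 1) with hf
  have hrow : ∀ k : ℕ, HasSum (fun n => f (k, n)) (x ^ 2 / (((k : ℝ) + 1) ^ 2 - x ^ 2)) := by
    intro k
    have hk : (0 : ℝ) ≤ k := Nat.cast_nonneg k
    have hlt : x ^ 2 / ((k : ℝ) + 1) ^ 2 < 1 := by
      rw [div_lt_one (by positivity)]
      nlinarith
    have := (hasSum_geometric_of_lt_one (by positivity) hlt).mul_left (x ^ 2 / ((k : ℝ) + 1) ^ 2)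
    convert! this using 1
    · ext n; simp only [hf]; ring
    · have : ((k : ℝ) + 1) ^ 2 - x ^ 2 ≠ 0 := by nlinarith
      have h2 : 1 - x ^ 2 / ((k : ℝ) + 1) ^ 2 ≠ 0 := by linarith
      field_simp
  have hsum : Summable f := by
    rw [summable_prod_of_nonneg (fun p => by simp only [hf, Pi.zero_apply]; positivity)]
    refine ⟨fun k => (hrow k).summable, ?_⟩
    simp_rw [fun k => (hrow k).tsum_eq]
    exact hc.summable
  have htot : HasSum f (1 / 2 - (π * x) * cos (π * x) / sin (π * x) / 2) := by
    have h := hsum.hasSum.prod_fiberwise hrow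
    rw [← h.unique hc]; exact hsum.hasSum
  have hsw := (Equiv.prodComm ℕ ℕ).hasSum_iff.2 htot
  refine hsw.prod_fiberwise (fun n => ?_)
  have := (zr_summable n).hasSum.mul_right (x ^ (2 * (n + 1)))
  convert! this using 1
  ext k
  simp only [hf, Function.comp, Equiv.prodComm_apply, Prod.swap]
  rw [div_pow, ← pow_mul, ← pow_mul]; ring

lemma zr_gen' (t : ℝ) (h0 : 0 < t) (h1 : t ≤ π / 2) :
    HasSum (fun n : ℕ => 2 * t * (zr n * (t / π) ^ (2 * (n + 1))))
      (t - t ^ 2 * cos t / sin t) := by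
  have := (zr_gen (t / π) (by positivity) (by rw [div_le_iff₀ pi_pos]; linarith)).mul_left (2 * t)
  rw [mul_div_cancel₀ _ pi_pos.ne'] at this
  convert! this using 1
  ring

lemma int_gen : HasSum (fun n : ℕ => zr n * ((1 / 4) ^ (n + 1) * (π ^ 2 / 4) / (n + 2)))
    (∫ t in (0 : ℝ)..(π / 2), (t - t ^ 2 * cos t / sin t)) := by
  have hp := pi_pos
  have key := intervalIntegral.hasSum_integral_of_dominated_convergence (μ := MeasureTheory.volume)
    (a := 0) (b := π / 2)
    (F := fun (n : ℕ) t => 2 * t * (zr n * (t / π) ^ (2 * (n + 1))))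
    (f := fun t => t - t ^ 2 * cos t / sin t)
    (fun n _ => π * (zr 0 * (1 / 4) ^ (n + 1)))
    (fun n => by
      apply Continuous.aestronglyMeasurable
      fun_prop)
    (fun n => by
      refine Filter.Eventually.of_forall fun t ht => ?_
      rw [Set.uIoc_of_le (by positivity)] at ht
      have ht0 := ht.1
      have h1 : t / π ≤ 1 / 2 := by rw [div_le_iff₀ pi_pos]; linarith [ht.2]
      have hz := zr_nonneg n
      rw [Real.norm_of_nonneg (by positivity)]
      have h2 : (t / π) ^ (2 * (n + 1)) ≤ (1 / 4) ^ (n + 1) := by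
        rw [pow_mul]
        apply pow_le_pow_left₀ (by positivity)
        have : 0 < t / π := by positivity
        nlinarith
      have := zr_le n
      have hz0 := zr_nonneg 0
      gcongr
      linarith [ht.2])
    (by
      refine Filter.Eventually.of_forall fun t ht => ?_
      refine ((((summable_nat_add_iff 1).2 (summable_geometric_of_lt_one
        (by norm_num) (by norm_num : (1 / 4 : ℝ) < 1))).mul_left _).mul_left _))
    (by simp)
    (by
      refine Filter.Eventually.of_forall fun t ht => ?_
      rw [Set.uIoc_of_le (by positivity)] at ht
      exact zr_gen' t ht.1 ht.2)
  convert! key using 1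
  ext n
  have : (fun t : ℝ => 2 * t * (zr n * (t / π) ^ (2 * (n + 1)))) =
      fun t => (2 * zr n / π ^ (2 * (n + 1))) * t ^ (2 * (n + 1) + 1) := by
    ext t
    rw [div_pow]; field_simp; ring
  rw [this, intervalIntegral.integral_const_mul, integral_pow]
  have e : (π / 2) ^ (2 * (n + 1) + 1 + 1) = π ^ (2 * (n + 1)) * (1 / 4) ^ (n + 1) * (π ^ 2 / 4) := by
    rw [div_pow, pow_add, pow_add, pow_add, pow_add, pow_mul 2 2, one_div, inv_pow]
    norm_num
    field_simp
    norm_num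
  rw [e]
  push_cast
  have : π ^ (2 * (n + 1)) ≠ 0 := by positivity
  have h3 : (n : ℝ) + 2 ≠ 0 := by positivity
  have h4 : 2 * ((n : ℝ) + 1) + 1 + 1 = 2 * (n + 2) := by ring
  rw [h4, zero_pow (by omega)]
  field_simp
  simp
  ring

lemma logsin_int : IntervalIntegrable (fun t => log (sin t)) MeasureTheory.volume 0 (π / 2) :=
  intervalIntegrable_log_sin

lemma sinlog_cont : Continuous (fun t : ℝ => sin t * log (sin t)) :=
  Real.continuous_mul_log.comp continuous_sin

lemma sinc_pos_aux (t : ℝ) (ht : t ∈ Set.Icc 0 (π / 2)) : sinc t ≠ 0 := by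
  rcases eq_or_lt_of_le ht.1 with h | h
  · simp [← h]
  · rw [sinc_of_ne_zero h.ne']
    have := sin_pos_of_pos_of_lt_pi h (by linarith [ht.2, pi_pos])
    positivity

lemma tcot_int : IntervalIntegrable (fun t => t ^ 2 * cos t / sin t) MeasureTheory.volume 0 (π / 2) := by
  have : (fun t => t ^ 2 * cos t / sin t) = fun t => t * cos t / sinc t := by
    ext t
    rcases eq_or_ne t 0 with h | h
    · simp [h]
    · rw [sinc_of_ne_zero h]; rw [div_div_eq_mul_div]; ring
  rw [this]
  apply ContinuousOn.intervalIntegrable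
  rw [Set.uIcc_of_le (by positivity)]
  refine ContinuousOn.div (by fun_prop) continuous_sinc.continuousOn sinc_pos_aux

lemma byparts : ∫ t in (0 : ℝ)..(π / 2), t ^ 2 * cos t / sin t
    = - (2 * ∫ t in (0 : ℝ)..(π / 2), t * log (sin t)) := by
  have hp := pi_pos
  have hi : IntervalIntegrable (fun t => t * log (sin t)) MeasureTheory.volume 0 (π / 2) :=
    logsin_int.continuousOn_mul continuous_id.continuousOn
  have h := intervalIntegral.integral_eq_sub_of_hasDerivAt_of_le (a := 0) (b := π / 2)
    (f := fun t => t ^ 2 * log (sin t))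
    (f' := fun t => 2 * (t * log (sin t)) + t ^ 2 * cos t / sin t) (by positivity)
    (by
      have : ContinuousOn (fun t => t * (sin t * log (sin t)) / sinc t) (Set.Icc 0 (π / 2)) :=
        ContinuousOn.div (continuous_id.mul sinlog_cont).continuousOn
          continuous_sinc.continuousOn sinc_pos_aux
      refine this.congr fun t ht => ?_
      rcases eq_or_lt_of_le ht.1 with h | h
      · simp [← h]
      · have := sin_pos_of_pos_of_lt_pi h (by linarith [ht.2, pi_pos])
        simp only [sinc_of_ne_zero h.ne']
        field_simp)
    (by
      intro t ht
      have hs := sin_pos_of_pos_of_lt_pi ht.1 (by linarith [ht.2, pi_pos])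
      convert! (hasDerivAt_pow 2 t).mul ((hasDerivAt_sin t).log hs.ne') using 1
      simp; ring)
    ((hi.const_mul 2).add tcot_int)
  rw [intervalIntegral.integral_add (hi.const_mul 2) tcot_int,
    intervalIntegral.integral_const_mul] at h
  simp at h
  linarith

lemma aux_h (k : ℕ) : ∃ h : ℝ → ℝ, h 0 = 0 ∧ h (π / 2) = π / 2 ∧
    ∀ t, ∃ d, HasDerivAt h d t ∧ d * sin t = sin (2 * (k + 1) * t) * cos t := by
  induction k with
  | zero =>
    refine ⟨fun t => t + sin t * cos t, by simp, by simp, fun t => ⟨_,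
      (hasDerivAt_id t).add ((hasDerivAt_sin t).mul (hasDerivAt_cos t)), ?_⟩⟩
    have := sin_sq_add_cos_sq t
    simp only [Nat.cast_zero, zero_add, mul_one, sin_two_mul]
    linear_combination (-sin t) * this
  | succ k ih =>
    obtain ⟨h, h0, h1, hd⟩ := ih
    have hk : (k : ℝ) + 1 ≠ 0 := by positivity
    have hk2 : (k : ℝ) + 2 ≠ 0 := by positivity
    have hder : ∀ c t : ℝ, c ≠ 0 → HasDerivAt (fun t => sin (c * t) / c) (cos (c * t)) t := by
      intro c t hc
      have := (((hasDerivAt_id t).const_mul c).sin).div_const c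
      convert! this using 1
      simp; field_simp
    refine ⟨fun t => h t + sin (2 * (k + 1) * t) / (2 * (k + 1))
      + sin (2 * (k + 2) * t) / (2 * (k + 2)), by simp [h0], ?_, fun t => ?_⟩
    · have e1 : 2 * ((k : ℝ) + 1) * (π / 2) = (k + 1 : ℕ) * π := by push_cast; ring
      have e2 : 2 * ((k : ℝ) + 2) * (π / 2) = (k + 2 : ℕ) * π := by push_cast; ring
      simp only [e1, e2, sin_nat_mul_pi, h1]; simp
    · obtain ⟨d, hd1, hd2⟩ := hd t
      refine ⟨_, (hd1.add (hder _ t (by positivity))).add (hder _ t (by positivity)), ?_⟩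
      rw [add_mul, add_mul, hd2]
      have e1 : 2 * ((k : ℝ) + 1) * t = (2 * k + 3) * t - t := by ring
      have e2 : 2 * ((k : ℝ) + 2) * t = (2 * k + 3) * t + t := by ring
      have e3 : 2 * (((k + 1 : ℕ) : ℝ) + 1) * t = (2 * k + 3) * t + t := by push_cast; ring
      rw [e3, e1, e2, sin_add, sin_sub, cos_add, cos_sub]
      ring

lemma J (k : ℕ) : ∫ t in (0 : ℝ)..(π / 2), cos (2 * (k + 1) * t) * log (sin t)
    = - π / (4 * (k + 1)) := by
  have hp := pi_pos
  obtain ⟨h, h0, h1, hd⟩ := aux_h k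
  choose d hd1 hd2 using hd
  have hk : (k : ℝ) + 1 ≠ 0 := by positivity
  have hi : IntervalIntegrable (fun t => cos (2 * (k + 1) * t) * log (sin t))
      MeasureTheory.volume 0 (π / 2) :=
    logsin_int.continuousOn_mul (by fun_prop)
  have hcont : Continuous h := continuous_iff_continuousAt.2 fun t => (hd1 t).continuousAt
  have H := intervalIntegral.integral_eq_sub_of_hasDerivAt_of_le (a := 0) (b := π / 2)
    (f := fun t => sin (2 * (k + 1) * t) * log (sin t) / (2 * (k + 1)) - h t / (2 * (k + 1)))
    (f' := fun t => cos (2 * (k + 1) * t) * log (sin t)) (by positivity)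
    (by
      have : ContinuousOn (fun t => (Polynomial.Chebyshev.U ℝ (2 * k + 1)).eval (cos t) *
          (sin t * log (sin t)) / (2 * (k + 1)) - h t / (2 * (k + 1))) (Set.Icc 0 (π / 2)) := by
        apply Continuous.continuousOn
        have a := sinlog_cont
        have b : Continuous (fun t => (Polynomial.Chebyshev.U ℝ (2 * k + 1)).eval (cos t)) :=
          (Polynomial.continuous _).comp continuous_cos
        exact ((b.mul a).div_const _).sub (hcont.div_const _)
      refine this.congr fun t ht => ?_
      have := Polynomial.Chebyshev.U_real_cos t (2 * k + 1)
      push_cast at this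
      rw [show (2 * (k : ℝ) + 1 + 1) * t = 2 * (k + 1) * t by ring] at this
      simp only [← this]
      ring)
    (by
      intro t ht
      have hs := sin_pos_of_pos_of_lt_pi ht.1 (by linarith [ht.2, pi_pos])
      have a := (((hasDerivAt_id t).const_mul (2 * ((k : ℝ) + 1))).sin).mul
        ((hasDerivAt_sin t).log hs.ne')
      have b := (a.div_const (2 * ((k : ℝ) + 1))).sub ((hd1 t).div_const (2 * ((k : ℝ) + 1)))
      convert! b using 1
      have : d t = sin (2 * (k + 1) * t) * cos t / sin t := by
        rw [eq_div_iff hs.ne', hd2]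
      rw [this]
      simp; field_simp; ring)
    hi
  rw [H, h0, h1]
  simp
  field_simp
  norm_num

lemma oddcos (t : ℝ) (h0 : 0 ≤ t) (h1 : t ≤ π / 2) :
    HasSum (fun j : ℕ => 1 / (2 * (j : ℝ) + 1) ^ 2 * cos (2 * (2 * j + 1) * t))
      (π ^ 2 / 8 - π * t / 2) := by
  have hp := pi_pos
  have main : ∀ x ∈ Set.Icc (0 : ℝ) 1, HasSum (fun n : ℕ => 1 / (n : ℝ) ^ 2 * cos (2 * π * n * x))
      (π ^ 2 * (x ^ 2 - x + 6⁻¹)) := by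
    intro x hx
    have := hasSum_one_div_nat_pow_mul_cos (k := 1) one_ne_zero hx
    have e := bernoulliFun_two x
    rw [bernoulliFun] at e
    simp only [mul_one] at this
    rw [e] at this
    convert! this using 1
    rw [show Nat.factorial 2 = 2 from rfl]; push_cast
    ring
  have hall := main (t / π) ⟨by positivity, by rw [div_le_iff₀ hp]; linarith⟩
  have hev := (main (2 * t / π) ⟨by positivity, by rw [div_le_iff₀ hp]; linarith⟩).mul_left (1 / 4)
  have hodd : Summable (fun j : ℕ => 1 / (2 * (j : ℝ) + 1) ^ 2 * cos (2 * (2 * j + 1) * t)) := by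
    have := hall.summable.comp_injective (i := fun j : ℕ => 2 * j + 1) (fun a b h => by simpa using h)
    convert! this using 1
    ext j
    simp only [Function.comp]
    push_cast
    congr 2
    field_simp
  have hsum := HasSum.even_add_odd (f := fun n : ℕ => 1 / (n : ℝ) ^ 2 * cos (2 * π * n * (t / π)))
    (by
      convert! hev using 1
      ext j
      push_cast
      rw [mul_pow, show 2 * π * (2 * (j : ℝ)) * (t / π) = 2 * π * j * (2 * t / π) by ring]
      norm_num
      ring)
    (by
      convert! hodd.hasSum using 1
      ext j
      push_cast
      congr 2
      field_simp)
  have := hsum.unique hall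
  have e : ∑' j : ℕ, 1 / (2 * (j : ℝ) + 1) ^ 2 * cos (2 * (2 * j + 1) * t)
     = π ^ 2 / 8 - π * t / 2 := by
    have h2 : π ^ 2 * ((t / π) ^ 2 - t / π + 6⁻¹) - 1 / 4 * (π ^ 2 * ((2 * t / π) ^ 2 - 2 * t / π + 6⁻¹)) = π ^ 2 / 8 - π * t / 2 := by
      field_simp
      ring
    linarith
  rw [← e]; exact hodd.hasSum

lemma oddsum_int : HasSum (fun j : ℕ => 1 / (2 * (j : ℝ) + 1) ^ 2 * (- π / (4 * (2 * j + 1))))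
    (∫ t in (0 : ℝ)..(π / 2), (π ^ 2 / 8 - π * t / 2) * log (sin t)) := by
  have hp := pi_pos
  have hsm : Summable (fun j : ℕ => 1 / (2 * (j : ℝ) + 1) ^ 2) := by
    simpa using (oddcos 0 le_rfl (by positivity)).summable
  have key := intervalIntegral.hasSum_integral_of_dominated_convergence (μ := MeasureTheory.volume)
    (a := 0) (b := π / 2)
    (F := fun (j : ℕ) t => 1 / (2 * (j : ℝ) + 1) ^ 2 * (cos (2 * (2 * j + 1) * t) * log (sin t)))
    (f := fun t => (π ^ 2 / 8 - π * t / 2) * log (sin t))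
    (fun j t => 1 / (2 * (j : ℝ) + 1) ^ 2 * |log (sin t)|)
    (fun n => by
      apply Measurable.aestronglyMeasurable
      fun_prop)
    (fun n => by
      refine Filter.Eventually.of_forall fun t ht => ?_
      rw [norm_mul, norm_mul, Real.norm_of_nonneg (by positivity), Real.norm_eq_abs, Real.norm_eq_abs]
      gcongr
      exact mul_le_of_le_one_left (abs_nonneg _) (abs_cos_le_one _))
    (Filter.Eventually.of_forall fun t ht => hsm.mul_right _)
    (by
      simp_rw [tsum_mul_right]
      exact logsin_int.abs.const_mul _)
    (by
      refine Filter.Eventually.of_forall fun t ht => ?_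
      rw [Set.uIoc_of_le (by positivity)] at ht
      have := (oddcos t ht.1.le ht.2).mul_right (log (sin t))
      simpa only [mul_assoc] using this)
  convert! key using 1
  ext j
  rw [intervalIntegral.integral_const_mul]
  have := J (2 * j)
  push_cast at this
  rw [this]

lemma final_int : HasSum (fun j : ℕ => 1 / (2 * (j : ℝ) + 1) ^ 3)
    (2 * (∫ t in (0 : ℝ)..(π / 2), t * log (sin t)) + π ^ 2 / 4 * log 2) := by
  have hp := pi_pos
  have hi : IntervalIntegrable (fun t => t * log (sin t)) MeasureTheory.volume 0 (π / 2) :=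
    logsin_int.continuousOn_mul continuous_id.continuousOn
  have h := oddsum_int.mul_left (-4 / π)
  have e : ∫ t in (0 : ℝ)..(π / 2), (π ^ 2 / 8 - π * t / 2) * log (sin t)
     = π ^ 2 / 8 * (-log 2 * π / 2) - π / 2 * ∫ t in (0 : ℝ)..(π / 2), t * log (sin t) := by
    rw [← integral_log_sin_zero_pi_div_two, ← intervalIntegral.integral_const_mul,
      ← intervalIntegral.integral_const_mul,
      ← intervalIntegral.integral_sub (logsin_int.const_mul _) (hi.const_mul _)]
    congr 1; ext t; ring
  rw [e] at h
  convert! h using 1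
  · ext j
    field_simp
  · field_simp
    ring

lemma odd_zeta : ((∑' j : ℕ, 1 / (2 * (j : ℝ) + 1) ^ 3 : ℝ) : ℂ) = 7 / 8 * riemannZeta 3 := by
  have h3 := zeta_nat_eq_tsum_of_gt_one (k := 3) (by norm_num)
  have hs : Summable (fun k : ℕ => 1 / (k : ℝ) ^ 3) :=
    Real.summable_one_div_nat_pow.2 (by norm_num)
  have ho : Summable (fun j : ℕ => 1 / (2 * (j : ℝ) + 1) ^ 3) := final_int.summable
  have hsum := HasSum.even_add_odd (f := fun k : ℕ => 1 / (k : ℝ) ^ 3)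
    (m := 1 / 8 * ∑' k : ℕ, 1 / (k : ℝ) ^ 3) (m' := ∑' j : ℕ, 1 / (2 * (j : ℝ) + 1) ^ 3)
    (by
      convert! hs.hasSum.mul_left (1 / 8) using 1
      ext j; push_cast; rw [mul_pow]; norm_num; ring)
    (by
      convert! ho.hasSum using 1
      ext j; push_cast; rfl)
  have := hsum.unique hs.hasSum
  have e : ∑' j : ℕ, 1 / (2 * (j : ℝ) + 1) ^ 3 = 7 / 8 * ∑' k : ℕ, 1 / (k : ℝ) ^ 3 := by linarith
  have h3' : riemannZeta 3 = ((∑' k : ℕ, 1 / (k : ℝ) ^ 3 : ℝ) : ℂ) := by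
    push_cast
    exact_mod_cast h3
  rw [e, h3']; push_cast; rfl

theorem stmt2 :
    ∑' n : ℕ, riemannZeta (2 * n) / ((n + 1) * 4 ^ n) =
      -(Real.log 2 : ℂ) + 7 * riemannZeta 3 / (2 * (π : ℂ) ^ 2) := by
  have hp := pi_pos
  have hT := final_int.tsum_eq
  have h := int_gen.mul_left (4 / π ^ 2)
  rw [intervalIntegral.integral_sub (by simp) tcot_int, byparts, integral_id] at h
  set I := ∫ t in (0 : ℝ)..(π / 2), t * log (sin t) with hI
  set T := ∑' j : ℕ, 1 / (2 * (j : ℝ) + 1) ^ 3 with hTdef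
  have hz : (T : ℂ) = 7 / 8 * riemannZeta 3 := odd_zeta
  have h2 : HasSum (fun n : ℕ => zr n / ((n + 2) * 4 ^ (n + 1)))
      (1 / 2 - log 2 + 4 * T / π ^ 2) := by
    convert! h using 1
    · ext n
      have h3 : (n : ℝ) + 2 ≠ 0 := by positivity
      rw [one_div, inv_pow]
      field_simp
    · rw [hT]
      field_simp
      ring
  have h3 := Complex.hasSum_ofReal.2 h2
  have h4 : HasSum (fun n : ℕ => riemannZeta (2 * n) / ((n + 1) * 4 ^ n))
      ((-1 / 2 : ℂ) + ((1 / 2 - log 2 + 4 * T / π ^ 2 : ℝ) : ℂ)) := by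
    rw [← hasSum_nat_add_iff' 1]
    convert! h3 using 1
    · ext n
      rw [← zr_zeta n]
      push_cast
      ring
    · simp [riemannZeta_zero]
  rw [h4.tsum_eq]
  push_cast
  rw [hz]
  have : (π : ℂ) ≠ 0 := by exact_mod_cast hp.ne'
  field_simp
  ring
end

section
/- The series ∑_{n=0}^∞ ζ(2n)/((n+1)·16^n) equals -(1/2)·log 2 + 35ζ(3)/(4π²) - 4G/π, where G is Catalan's constant. -/
open Real

lemma aux_deriv (b : ℕ → ℂ) (C : ℝ) (hb : ∀ n, ‖b n‖ ≤ C) (u : ℂ) (hu : ‖u‖ < 1) :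
    HasDerivAt (fun v => ∑' n, b n * v ^ (n + 1) / (n + 1)) (∑' n, b n * u ^ n) u := by
  obtain ⟨r, hr, hr1⟩ := exists_between hu
  have hr0 : 0 ≤ r := (norm_nonneg u).trans hr.le
  refine hasDerivAt_tsum_of_isPreconnected (u := fun n => C * r ^ n)
    (g := fun n v => b n * v ^ (n + 1) / (n + 1)) (g' := fun n v => b n * v ^ n) (y₀ := 0)
    ((summable_geometric_of_lt_one hr0 hr1).mul_left C) (t := Metric.ball 0 r)
    Metric.isOpen_ball (convex_ball 0 r).isPreconnected ?_ ?_ ?_ ?_ ?_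
  · intro n y _
    have h := ((hasDerivAt_pow (n + 1) y).const_mul (b n)).div_const ((n : ℂ) + 1)
    refine h.congr_deriv ?_
    have : (n : ℂ) + 1 ≠ 0 := by exact_mod_cast Nat.succ_ne_zero n
    rw [div_eq_iff this]
    push_cast
    ring
  · intro n y hy
    rw [norm_mul, norm_pow]
    have : ‖y‖ ≤ r := by simpa using (le_of_lt (by simpa using hy))
    have hC : 0 ≤ C := (norm_nonneg _).trans (hb 0)
    gcongr
    exact hb n
  · simpa using lt_of_le_of_lt (norm_nonneg u) hr
  · simp
  · simpa using hr

lemma aux_zeta (n : ℕ) : riemannZeta (2 * ((n + 1 : ℕ) : ℂ)) =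
    ∑' k : ℕ, (1 / ((k : ℂ) + 1) ^ 2) ^ (n + 1) := by
  rw [zeta_eq_tsum_one_div_nat_add_one_cpow]
  · congr 1
    ext k
    have : (2 * ((n + 1 : ℕ) : ℂ)) = ((2 * (n + 1) : ℕ) : ℂ) := by push_cast; ring
    rw [this, Complex.cpow_natCast, pow_mul, div_pow, one_pow]
  · have : (2 * ((n + 1 : ℕ) : ℂ)) = ((2 * (n + 1) : ℕ) : ℂ) := by push_cast; ring
    rw [this, Complex.natCast_re]
    exact_mod_cast (by omega)

lemma aux_sq_sum : Summable (fun k : ℕ => 1 / ((k : ℝ) + 1) ^ 2) := by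
  have := (summable_nat_add_iff 1).mpr (Real.summable_one_div_nat_pow.mpr (one_lt_two))
  simpa using this

lemma aux_norm_w (k : ℕ) : ‖(1 / ((k : ℂ) + 1) ^ 2)‖ = 1 / ((k : ℝ) + 1) ^ 2 := by
  rw [norm_div, norm_pow, norm_one]
  congr 2
  exact_mod_cast Complex.norm_natCast (k + 1)

lemma aux_w_le (k : ℕ) : 1 / ((k : ℝ) + 1) ^ 2 ≤ 1 := by
  rw [div_le_one (by positivity)]
  have : (0 : ℝ) ≤ k := Nat.cast_nonneg k
  nlinarith

lemma aux_zeta_bound : ∃ C, ∀ n : ℕ, ‖riemannZeta (2 * (n : ℂ))‖ ≤ C := by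
  refine ⟨max (1 / 2) (∑' k : ℕ, 1 / ((k : ℝ) + 1) ^ 2), fun n => ?_⟩
  cases n with
  | zero => simp [riemannZeta_zero]
  | succ n =>
    refine le_trans ?_ (le_max_right _ _)
    rw [aux_zeta]
    refine tsum_of_norm_bounded aux_sq_sum.hasSum fun k => ?_
    rw [norm_pow, aux_norm_w, pow_succ]
    exact mul_le_of_le_one_left (by positivity) (pow_le_one₀ (by positivity) (aux_w_le k))

lemma aux_summ (b : ℕ → ℂ) (C : ℝ) (hb : ∀ n, ‖b n‖ ≤ C) (u : ℂ) (hu : ‖u‖ < 1) :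
    Summable (fun n => b n * u ^ n) := by
  refine Summable.of_norm_bounded
    ((summable_geometric_of_lt_one (norm_nonneg u) hu).mul_left C) fun n => ?_
  rw [norm_mul, norm_pow]
  gcongr
  exact hb n

lemma aux_cot_s5 (x : ℂ) (hx : 0 < x.im) (hx1 : ‖x‖ < 1) :
    ∑' n : ℕ, riemannZeta (2 * (n : ℂ)) * (x ^ 2) ^ n =
      -(π * x * Complex.cot (π * x)) / 2 := by
  obtain ⟨C, hC⟩ := aux_zeta_bound
  have hu : ‖x ^ 2‖ < 1 := by
    rw [norm_pow]; exact pow_lt_one₀ (norm_nonneg _) hx1 two_ne_zero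
  have hxi : x ∈ Complex.integerComplement := by
    rintro ⟨n, hn⟩
    rw [← hn] at hx
    simp at hx
  have hx0 : x ≠ 0 := by rintro rfl; simp at hx
  have hcot := cot_series_rep' hxi
  set u := x ^ 2 with hudef
  rw [(aux_summ _ C hC u hu).tsum_eq_zero_add]
  have h1 : ∀ n : ℕ, riemannZeta (2 * ((n + 1 : ℕ) : ℂ)) * u ^ (n + 1) =
      ∑' k : ℕ, (u * (1 / ((k : ℂ) + 1) ^ 2)) ^ (n + 1) := by
    intro n
    rw [aux_zeta, ← tsum_mul_right]
    congr 1; ext k; rw [mul_pow, mul_comm]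
  simp_rw [h1]
  have hs : Summable (Function.uncurry fun (n k : ℕ) => (u * (1 / ((k : ℂ) + 1) ^ 2)) ^ (n + 1)) := by
    have := (summable_geometric_of_lt_one (norm_nonneg u) hu).mul_of_nonneg aux_sq_sum
      (fun n => by positivity) (fun n => by positivity)
    refine Summable.of_norm_bounded this fun p => ?_
    obtain ⟨n, k⟩ := p
    simp only [Function.uncurry]
    rw [norm_pow, norm_mul, aux_norm_w, mul_pow]
    have h2 := aux_w_le k
    have h3 : (0 : ℝ) ≤ 1 / ((k : ℝ) + 1) ^ 2 := by positivity
    have h4 : (1 / ((k : ℝ) + 1) ^ 2) ^ (n + 1) ≤ 1 / ((k : ℝ) + 1) ^ 2 := by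
      rw [pow_succ]; exact mul_le_of_le_one_left h3 (pow_le_one₀ h3 h2)
    have h5 : ‖u‖ ^ (n + 1) ≤ ‖u‖ ^ n := pow_le_pow_of_le_one (norm_nonneg _) hu.le (by omega)
    gcongr
  rw [← hs.tsum_comm]
  have h6 : ∀ k : ℕ, ∑' n : ℕ, (u * (1 / ((k : ℂ) + 1) ^ 2)) ^ (n + 1) =
      -(x / 2) * (1 / (x - (k + 1)) + 1 / (x + (k + 1))) := by
    intro k
    have hk : ((k : ℂ) + 1) ≠ 0 := by exact_mod_cast Nat.succ_ne_zero k
    have hlt : ‖u * (1 / ((k : ℂ) + 1) ^ 2)‖ < 1 := by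
      rw [norm_mul, aux_norm_w]
      exact lt_of_le_of_lt (mul_le_of_le_one_right (norm_nonneg _) (aux_w_le k)) hu
    have hp : ∀ n : ℕ, (u * (1 / ((k : ℂ) + 1) ^ 2)) ^ (n + 1) =
        (u * (1 / ((k : ℂ) + 1) ^ 2)) ^ n * (u * (1 / ((k : ℂ) + 1) ^ 2)) := fun n => pow_succ _ n
    simp_rw [hp]
    rw [tsum_mul_right, tsum_geometric_of_norm_lt_one hlt]
    have e1 : x - (k + 1) ≠ 0 := by
      intro h; apply hx.ne'; simpa using congrArg Complex.im h
    have e2 : x + (k + 1) ≠ 0 := by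
      intro h; apply hx.ne'; simpa using congrArg Complex.im h
    have e3 : 1 - u * (1 / ((k : ℂ) + 1) ^ 2) = -((x - (k + 1)) * (x + (k + 1))) / (k + 1) ^ 2 := by
      field_simp; rw [hudef]; ring
    rw [e3, hudef]
    field_simp
    ring
  simp_rw [h6]
  rw [tsum_mul_left, ← hcot]
  simp [riemannZeta_zero]
  field_simp
  ring

noncomputable def PL (s : ℕ) (z : ℂ) : ℂ := ∑' n : ℕ, (1 / ((n : ℂ) + 1) ^ s) * z ^ (n + 1) / (n + 1)

lemma aux_norm_succ (k : ℕ) : ‖(k : ℂ) + 1‖ = (k : ℝ) + 1 := by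
  exact_mod_cast Complex.norm_natCast (k + 1)

lemma aux_succ_ne (k : ℕ) : (k : ℂ) + 1 ≠ 0 := by exact_mod_cast Nat.succ_ne_zero k

lemma PL_deriv (s : ℕ) (z : ℂ) (hz : ‖z‖ < 1) (hz0 : z ≠ 0) :
    HasDerivAt (PL (s + 1)) (PL s z / z) z := by
  have h := aux_deriv (fun n : ℕ => 1 / ((n : ℂ) + 1) ^ (s + 1)) 1 (fun n => by
    rw [norm_div, norm_pow, aux_norm_succ, norm_one, div_le_one (by positivity)]
    exact one_le_pow₀ (by linarith [Nat.cast_nonneg (α := ℝ) n])) z hz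
  refine HasDerivAt.congr_deriv (f := PL (s + 1)) h ?_
  rw [PL, ← tsum_div_const]
  refine tsum_congr fun n => ?_
  have := aux_succ_ne n
  field_simp
  ring

lemma PL_zero (z : ℂ) (hz : ‖z‖ < 1) : PL 0 z = -Complex.log (1 - z) := by
  have h := Complex.hasSum_taylorSeries_neg_log hz
  rw [← h.tsum_eq, h.summable.tsum_eq_zero_add, PL]
  simp

lemma PL_cont (s : ℕ) : ContinuousOn (PL (s + 1)) (Metric.closedBall 0 1) := by
  unfold PL
  refine continuousOn_tsum (fun n => by fun_prop) aux_sq_sum ?_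
  intro n z hz
  have hz1 : ‖z‖ ≤ 1 := by simpa using hz
  rw [norm_div, norm_mul, norm_div, norm_pow, norm_pow, aux_norm_succ, norm_one]
  have h1 : (1 : ℝ) ≤ (n : ℝ) + 1 := by linarith [Nat.cast_nonneg (α := ℝ) n]
  have h2 : (n : ℝ) + 1 ≤ ((n : ℝ) + 1) ^ (s + 1) := le_self_pow₀ h1 (by omega)
  have h3 : ‖z‖ ^ (n + 1) ≤ 1 := pow_le_one₀ (norm_nonneg _) hz1
  calc 1 / ((n : ℝ) + 1) ^ (s + 1) * ‖z‖ ^ (n + 1) / (n + 1)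
      ≤ 1 / ((n : ℝ) + 1) * 1 / (n + 1) := by gcongr
    _ = _ := by field_simp

lemma aux_real_summ (s : ℕ) : Summable (fun k : ℕ => 1 / ((k : ℝ) + 1) ^ (s + 2)) := by
  have := (summable_nat_add_iff 1).mpr (Real.summable_one_div_nat_pow.mpr (show 1 < s + 2 by omega))
  simpa using this

lemma aux_alt_summ (s : ℕ) : Summable (fun k : ℕ => (-1) ^ k / ((k : ℝ) + 1) ^ (s + 2)) := by
  refine Summable.of_norm_bounded (aux_real_summ s) fun k => ?_
  rw [norm_div, norm_pow, norm_neg, norm_one, one_pow, norm_pow, Real.norm_of_nonneg (by positivity)]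

lemma aux_odd_summ (s : ℕ) : Summable (fun k : ℕ => (-1) ^ k / (2 * (k : ℝ) + 1) ^ (s + 2)) := by
  refine Summable.of_norm_bounded (aux_real_summ s) fun k => ?_
  rw [norm_div, norm_pow, norm_neg, norm_one, one_pow, norm_pow, Real.norm_of_nonneg (by positivity)]
  gcongr
  linarith [Nat.cast_nonneg (α := ℝ) k]

lemma aux_hs_congr {E : Type*} [AddCommMonoid E] [TopologicalSpace E] {f g : ℕ → E} {a : E}
    (h : ∀ k, f k = g k) : HasSum f a ↔ HasSum g a := by
  rw [funext h]

lemma PL_I (s : ℕ) : PL (s + 1) Complex.I =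
    Complex.I * ((∑' k : ℕ, (-1) ^ k / (2 * (k : ℝ) + 1) ^ (s + 2) : ℝ) : ℂ) -
      (((1 / 2 ^ (s + 2)) * ∑' k : ℕ, (-1) ^ k / ((k : ℝ) + 1) ^ (s + 2) : ℝ) : ℂ) := by
  have h1 := (Complex.hasSum_ofReal.mpr (aux_odd_summ s).hasSum).mul_left Complex.I
  have h2 := Complex.hasSum_ofReal.mpr ((aux_alt_summ s).hasSum.mul_left (-(1 / 2 ^ (s + 2))))
  unfold PL
  have := HasSum.even_add_odd
    (f := fun n : ℕ => (1 / ((n : ℂ) + 1) ^ (s + 1)) * Complex.I ^ (n + 1) / (n + 1))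
    (by
      refine (aux_hs_congr fun k => ?_).mpr h1
      have := aux_succ_ne (2 * k)
      push_cast at this ⊢
      rw [pow_succ Complex.I, pow_mul, Complex.I_sq]
      field_simp
      ring) (by
      refine (aux_hs_congr fun k => ?_).mpr h2
      have := aux_succ_ne k
      have e : ((2 * k + 1 : ℕ) : ℂ) + 1 = 2 * ((k : ℂ) + 1) := by push_cast; ring
      rw [e]
      push_cast
      rw [show 2 * k + 1 + 1 = 2 * (k + 1) by ring, pow_mul, Complex.I_sq]
      rw [mul_pow, mul_comm (1 / _)]
      field_simp
      ring)
  rw [this.tsum_eq]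
  push_cast
  ring

lemma aux_eta : ∑' k : ℕ, (-1) ^ k / ((k : ℝ) + 1) ^ 3 =
    3 / 4 * ∑' k : ℕ, 1 / ((k : ℝ) + 1) ^ 3 := by
  have hA := aux_real_summ 1
  have hE : HasSum (fun k : ℕ => 1 / (((2 * k + 1 : ℕ) : ℝ) + 1) ^ 3)
      (1 / 8 * ∑' k : ℕ, 1 / ((k : ℝ) + 1) ^ 3) := by
    refine (aux_hs_congr fun k => ?_).mpr (hA.hasSum.mul_left (1 / 8))
    push_cast
    rw [show (2 * (k : ℝ) + 1 + 1) = 2 * (k + 1) by ring]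
    field_simp
    norm_num
  have hO : Summable (fun k : ℕ => 1 / (((2 * k : ℕ) : ℝ) + 1) ^ 3) :=
    hA.comp_injective (i := fun k : ℕ => 2 * k) (fun a b h => by simpa using h)
  have h1 := (HasSum.even_add_odd (f := fun k : ℕ => 1 / ((k : ℝ) + 1) ^ 3) hO.hasSum hE).tsum_eq
  have h2 := (HasSum.even_add_odd (f := fun k : ℕ => (-1) ^ k / ((k : ℝ) + 1) ^ 3)
    (by simpa using hO.hasSum) (by
      refine (aux_hs_congr fun k => ?_).mpr hE.neg
      rw [pow_succ, pow_mul]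
      simp
      ring)).tsum_eq
  simp only [Nat.cast_mul, Nat.cast_ofNat] at h2 h1
  simp only [one_div] at h1 h2 ⊢
  linarith

lemma aux_zeta3 : riemannZeta 3 = ((∑' k : ℕ, 1 / ((k : ℝ) + 1) ^ 3 : ℝ) : ℂ) := by
  rw [zeta_eq_tsum_one_div_nat_add_one_cpow (by norm_num)]
  push_cast
  refine tsum_congr fun k => ?_
  congr 1
  exact_mod_cast Complex.cpow_natCast ((k : ℂ) + 1) 3

lemma PL_one : PL 2 1 = riemannZeta 3 := by
  rw [aux_zeta3, PL]
  push_cast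
  refine tsum_congr fun k => ?_
  have := aux_succ_ne k
  rw [one_pow]
  field_simp

noncomputable def FF (u : ℂ) : ℂ := ∑' n : ℕ, riemannZeta (2 * (n : ℂ)) * u ^ (n + 1) / (n + 1)

lemma FF_deriv (u : ℂ) (hu : ‖u‖ < 1) :
    HasDerivAt FF (∑' n : ℕ, riemannZeta (2 * (n : ℂ)) * u ^ n) u := by
  obtain ⟨C, hC⟩ := aux_zeta_bound
  exact aux_deriv _ C hC u hu

noncomputable def GG (x : ℂ) : ℂ :=
  π * Complex.I * x ^ 3 / 3 - x * PL 1 (Complex.exp (2 * π * Complex.I * x)) / (π * Complex.I)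
    - PL 2 (Complex.exp (2 * π * Complex.I * x)) / (2 * π ^ 2)

noncomputable def DD (x : ℂ) : ℂ :=
  FF (x ^ 2) - (GG x - x ^ 2 * Complex.log (1 - Complex.exp (2 * π * Complex.I * x)))

lemma norm_q (x : ℂ) : ‖Complex.exp (2 * π * Complex.I * x)‖ = Real.exp (-(2 * π * x.im)) := by
  rw [Complex.norm_exp]
  congr 1
  simp

lemma one_sub_slit (z : ℂ) (hz : ‖z‖ < 1) : 1 - z ∈ Complex.slitPlane := by
  left
  have := Complex.re_le_norm z
  simp
  linarith

lemma DD_deriv (x : ℂ) (hx : 0 < x.im) (hx1 : ‖x‖ < 1) : HasDerivAt DD 0 x := by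
  have hu : ‖x ^ 2‖ < 1 := by
    rw [norm_pow]; exact pow_lt_one₀ (norm_nonneg _) hx1 two_ne_zero
  have hF := (FF_deriv (x ^ 2) hu).comp x (hasDerivAt_pow 2 x)
  rw [aux_cot_s5 x hx hx1, Complex.cot_pi_eq_exp_ratio] at hF
  have hq : HasDerivAt (fun x : ℂ => Complex.exp (2 * π * Complex.I * x))
      (Complex.exp (2 * π * Complex.I * x) * (2 * π * Complex.I)) x := by
    simpa using ((hasDerivAt_id x).const_mul (2 * π * Complex.I)).cexp
  have hz1 : ‖Complex.exp (2 * π * Complex.I * x)‖ < 1 := by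
    rw [norm_q, Real.exp_lt_one_iff]
    have := mul_pos (mul_pos two_pos Real.pi_pos) hx
    linarith
  have hz0 := Complex.exp_ne_zero (2 * π * Complex.I * x)
  have h1 := (PL_deriv 0 _ hz1 hz0).comp x hq
  have h2 := (PL_deriv 1 _ hz1 hz0).comp x hq
  have h3 := (hq.const_sub 1).clog (one_sub_slit _ hz1)
  rw [PL_zero _ hz1] at h1
  have hG := ((((hasDerivAt_pow 3 x).const_mul (π * Complex.I)).div_const 3).sub
    (((hasDerivAt_id x).mul h1).div_const (π * Complex.I))).sub (h2.div_const (2 * π ^ 2))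
  have hD := hF.sub (hG.sub ((hasDerivAt_pow 2 x).mul h3))
  have hne := Complex.slitPlane_ne_zero (one_sub_slit _ hz1)
  refine HasDerivAt.congr_deriv (f := DD) hD ?_
  simp only [Function.comp, id]
  set z := Complex.exp (2 * π * Complex.I * x)
  have hpi : (π : ℂ) ≠ 0 := by exact_mod_cast Real.pi_ne_zero
  have hI := Complex.I_sq
  have hIn := Complex.I_ne_zero
  field_simp
  ring_nf
  simp only [hI, Complex.I_pow_three, Complex.I_pow_four]
  ring_nf

open Filter Topology

lemma DD_const (x y : ℂ) (hx : 0 < x.im) (hx1 : ‖x‖ < 1) (hy : 0 < y.im) (hy1 : ‖y‖ < 1) :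
    DD x = DD y := by
  have hc : Convex ℝ ({x : ℂ | 0 < x.im} ∩ Metric.ball 0 1) :=
    (convex_halfSpace_im_gt 0).inter (convex_ball 0 1)
  have ho : IsOpen ({x : ℂ | 0 < x.im} ∩ Metric.ball 0 1) :=
    (isOpen_lt continuous_const Complex.continuous_im).inter Metric.isOpen_ball
  obtain ⟨a, ha⟩ := ho.exists_is_const_of_deriv_eq_zero (𝕜 := ℂ) (f := DD) hc.isPreconnected
    (fun x hx => (DD_deriv x hx.1 (by simpa using hx.2)).differentiableAt.differentiableWithinAt)
    (fun x hx => (DD_deriv x hx.1 (by simpa using hx.2)).deriv)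
  rw [ha x ⟨hx, by simpa using hx1⟩, ha y ⟨hy, by simpa using hy1⟩]

lemma line_tendsto (a : ℝ) :
    Tendsto (fun t : ℝ => (a : ℂ) + t * Complex.I) (𝓝[>] 0) (𝓝 a) := by
  have : Continuous (fun t : ℝ => (a : ℂ) + t * Complex.I) := by fun_prop
  have h := this.tendsto 0
  simp only [Complex.ofReal_zero, zero_mul, add_zero] at h
  exact h.mono_left nhdsWithin_le_nhds

lemma q_tendsto (a : ℝ) :
    Tendsto (fun t : ℝ => Complex.exp (2 * π * Complex.I * ((a : ℂ) + t * Complex.I))) (𝓝[>] 0)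
      (𝓝[Metric.closedBall 0 1] (Complex.exp (2 * π * Complex.I * a))) := by
  refine tendsto_nhdsWithin_iff.mpr ⟨?_, ?_⟩
  · have : Continuous (fun x : ℂ => Complex.exp (2 * π * Complex.I * x)) := by fun_prop
    exact (this.tendsto (a : ℂ)).comp (line_tendsto a)
  · filter_upwards [self_mem_nhdsWithin] with t ht
    have ht' : (0 : ℝ) < t := ht
    simp only [Metric.mem_closedBall, dist_zero_right]
    rw [norm_q, Real.exp_le_one_iff]
    have := mul_pos (mul_pos two_pos Real.pi_pos) ht'
    simp
    linarith

lemma q_mem (a : ℝ) : Complex.exp (2 * π * Complex.I * a) ∈ Metric.closedBall (0 : ℂ) 1 := by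
  simp only [Metric.mem_closedBall, dist_zero_right]
  rw [norm_q]
  simp

lemma FF_GG_tendsto (a : ℝ) (ha : |a| < 1) :
    Tendsto (fun t : ℝ => FF (((a : ℂ) + t * Complex.I) ^ 2) - GG ((a : ℂ) + t * Complex.I)) (𝓝[>] 0)
      (𝓝 (FF ((a : ℂ) ^ 2) - GG a)) := by
  have hl := line_tendsto a
  have hq := q_tendsto a
  have h1 := ((PL_cont 0) _ (q_mem a)).tendsto.comp hq
  have h2 := ((PL_cont 1) _ (q_mem a)).tendsto.comp hq
  have hF : ContinuousAt FF ((a : ℂ) ^ 2) := by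
    refine (FF_deriv _ ?_).continuousAt
    rw [norm_pow, Complex.norm_real]
    exact pow_lt_one₀ (norm_nonneg _) ha two_ne_zero
  refine (hF.tendsto.comp (hl.pow 2)).sub ?_
  exact ((((hl.pow 3).const_mul (π * Complex.I)).div_const 3).sub
    ((hl.mul h1).div_const (π * Complex.I))).sub (h2.div_const (2 * π ^ 2))

lemma log_bound (s : ℝ) (hs : 0 < s) : |Real.log (1 - Real.exp (-s))| ≤ 1 / s := by
  have he : Real.exp (-s) < 1 := by rw [Real.exp_lt_one_iff]; linarith
  have hp : 0 < 1 - Real.exp (-s) := by linarith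
  have hneg : Real.log (1 - Real.exp (-s)) ≤ 0 :=
    Real.log_nonpos hp.le (by linarith [Real.exp_pos (-s)])
  rw [abs_of_nonpos hneg]
  have h1 := Real.one_sub_inv_le_log_of_pos hp
  have h2 : (1 - Real.exp (-s))⁻¹ - 1 ≤ 1 / s := by
    have h3 := Real.add_one_le_exp s
    have h4 : Real.exp (-s) * Real.exp s = 1 := by rw [← Real.exp_add]; simp
    rw [sub_le_iff_le_add, inv_le_comm₀ hp (by positivity)]
    have h5 : (1 / s + 1)⁻¹ = s / (s + 1) := by field_simp; ring
    rw [h5, div_le_iff₀ (by linarith)]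
    nlinarith [Real.exp_pos (-s)]
  linarith

lemma DD_zero : Tendsto (fun t : ℝ => DD (((0 : ℝ) : ℂ) + t * Complex.I)) (𝓝[>] 0)
    (𝓝 (riemannZeta 3 / (2 * π ^ 2))) := by
  have h := FF_GG_tendsto 0 (by simp)
  have hv : FF (((0 : ℝ) : ℂ) ^ 2) - GG ((0 : ℝ) : ℂ) = riemannZeta 3 / (2 * π ^ 2) := by
    simp [FF, GG, PL_one]
  rw [hv] at h
  have hz : Tendsto (fun t : ℝ => (((0 : ℝ) : ℂ) + t * Complex.I) ^ 2 *
      Complex.log (1 - Complex.exp (2 * π * Complex.I * (((0 : ℝ) : ℂ) + t * Complex.I)))) (𝓝[>] 0)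
      (𝓝 0) := by
    have hb : Tendsto (fun t : ℝ => t / (2 * π)) (𝓝[>] 0) (𝓝 0) := by
      have : Continuous (fun t : ℝ => t / (2 * π)) := by fun_prop
      have h := this.tendsto 0
      simp only [zero_div] at h
      exact h.mono_left nhdsWithin_le_nhds
    refine squeeze_zero_norm' ?_ hb
    filter_upwards [self_mem_nhdsWithin] with t ht
    have ht' : (0 : ℝ) < t := ht
    have hs : 0 < 2 * π * t := by positivity
    have e1 : 2 * π * Complex.I * (((0 : ℝ) : ℂ) + t * Complex.I) = ((-(2 * π * t) : ℝ) : ℂ) := by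
      push_cast
      linear_combination (2 * π * t : ℂ) * Complex.I_sq
    have hp : 0 ≤ 1 - Real.exp (-(2 * π * t)) := by
      have : Real.exp (-(2 * π * t)) ≤ 1 := by rw [Real.exp_le_one_iff]; linarith
      linarith
    rw [e1, ← Complex.ofReal_exp, ← Complex.ofReal_one, ← Complex.ofReal_sub,
      ← Complex.ofReal_log hp, norm_mul, Complex.norm_real, Real.norm_eq_abs, norm_pow]
    have e2 : ‖((0 : ℝ) : ℂ) + t * Complex.I‖ = t := by
      simp [abs_of_pos ht']
    rw [e2]
    calc t ^ 2 * _ ≤ t ^ 2 * (1 / (2 * π * t)) := by gcongr; exact log_bound _ hs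
      _ = t / (2 * π) := by field_simp
  have := h.add hz
  rw [add_zero] at this
  refine this.congr fun t => ?_
  unfold DD
  ring

lemma q_quarter : Complex.exp (2 * π * Complex.I * ((1 / 4 : ℝ) : ℂ)) = Complex.I := by
  rw [show 2 * π * Complex.I * ((1 / 4 : ℝ) : ℂ) = π / 2 * Complex.I by push_cast; ring]
  exact Complex.exp_pi_div_two_mul_I

lemma DD_quarter : Tendsto (fun t : ℝ => DD (((1 / 4 : ℝ) : ℂ) + t * Complex.I)) (𝓝[>] 0)
    (𝓝 (DD ((1 / 4 : ℝ) : ℂ))) := by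
  have h := FF_GG_tendsto (1 / 4) (by rw [abs_of_pos] <;> norm_num)
  have hl := line_tendsto (1 / 4)
  have hq := tendsto_nhds_of_tendsto_nhdsWithin (q_tendsto (1 / 4))
  have hz := (hl.pow 2).mul ((tendsto_const_nhds (x := (1 : ℂ))).sub hq |>.clog (by
    rw [q_quarter]; left; simp))
  have := h.add hz
  unfold DD
  convert this using 2 <;> ring

lemma main_eq : DD ((1 / 4 : ℝ) : ℂ) = riemannZeta 3 / (2 * π ^ 2) := by
  refine tendsto_nhds_unique DD_quarter (DD_zero.congr' ?_)
  have h1 : Set.Ioo (0 : ℝ) (1 / 2) ∈ 𝓝[>] (0 : ℝ) := Ioo_mem_nhdsGT (by norm_num)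
  filter_upwards [h1] with t ht
  have hn : ‖(t : ℂ) * Complex.I‖ < 1 / 2 := by
    simp [abs_of_pos ht.1]; linarith [ht.2]
  apply DD_const
  · simpa using ht.1
  · refine (norm_add_le _ _).trans_lt ?_
    simp only [Complex.ofReal_zero, norm_zero]; linarith
  · simpa using ht.1
  · refine (norm_add_le _ _).trans_lt ?_
    rw [Complex.norm_real, Real.norm_of_nonneg (by norm_num)]
    linarith

lemma zeta_real (n : ℕ) : (riemannZeta (2 * (n : ℂ))).im = 0 := by
  cases n with
  | zero => simp [riemannZeta_zero]
  | succ n =>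
    have : riemannZeta (2 * ((n + 1 : ℕ) : ℂ)) =
      ((∑' k : ℕ, (1 / ((k : ℝ) + 1) ^ 2) ^ (n + 1) : ℝ) : ℂ) := by
      rw [aux_zeta]; push_cast; rfl
    rw [this, Complex.ofReal_im]

lemma log_one_sub_I : (Complex.log (1 - Complex.I)).re = Real.log 2 / 2 := by
  rw [Complex.log_re]
  have : ‖1 - Complex.I‖ = √2 := by
    rw [Complex.norm_def]; congr 1; simp [Complex.normSq_apply]; norm_num
  rw [this, Real.log_sqrt (by norm_num)]

theorem stmt5 :
    ∑' n : ℕ, riemannZeta (2 * n) / ((n + 1) * 16 ^ n) =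
      -(1 / 2) * (Real.log 2 : ℂ) + 35 * riemannZeta 3 / (4 * (π : ℂ) ^ 2) -
        4 * (catalanConst : ℂ) / (π : ℂ) := by
  have hFF : ∑' n : ℕ, riemannZeta (2 * n) / ((n + 1) * 16 ^ n) = 16 * FF (((1 / 4 : ℝ) : ℂ) ^ 2) := by
    rw [FF, ← tsum_mul_left]
    refine tsum_congr fun n => ?_
    have := aux_succ_ne n
    push_cast
    rw [show ((1 / 4 : ℂ)) ^ 2 = 1 / 16 by norm_num, div_pow, one_pow, pow_succ]
    field_simp
  have hreal : FF (((1 / 4 : ℝ) : ℂ) ^ 2) = ((FF (((1 / 4 : ℝ) : ℂ) ^ 2)).re : ℂ) := by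
    have : FF (((1 / 4 : ℝ) : ℂ) ^ 2) = ((∑' n : ℕ, (riemannZeta (2 * (n : ℂ))).re *
        ((1 / 4 : ℝ) ^ 2) ^ (n + 1) / (n + 1) : ℝ) : ℂ) := by
      rw [FF, Complex.ofReal_tsum]
      refine tsum_congr fun n => ?_
      have hz : ((riemannZeta (2 * (n : ℂ))).re : ℂ) = riemannZeta (2 * (n : ℂ)) :=
        Complex.ext (by simp) (by simp [zeta_real])
      push_cast
      rw [hz]
    rw [this, Complex.ofReal_re]
  rw [hFF, hreal]
  have hm := main_eq
  unfold DD GG at hm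
  rw [q_quarter, PL_I 0, PL_I 1, aux_zeta3] at hm
  simp only [Nat.reduceAdd, zero_add] at hm
  rw [aux_eta] at hm
  rw [aux_zeta3]
  have hcat : ∑' k : ℕ, (-1) ^ k / (2 * (k : ℝ) + 1) ^ 2 = catalanConst := rfl
  rw [hcat] at hm
  generalize (∑' k : ℕ, 1 / ((k : ℝ) + 1) ^ 3) = A at *
  generalize (∑' k : ℕ, (-1) ^ k / (2 * (k : ℝ) + 1) ^ 3) = B at *
  generalize (∑' k : ℕ, (-1) ^ k / ((k : ℝ) + 1) ^ 2) = E at *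
  have hlog := log_one_sub_I
  generalize Complex.log (1 - Complex.I) = L at *
  generalize FF (((1 / 4 : ℝ) : ℂ) ^ 2) = F at *
  have hL : L = ((Real.log 2 / 2 : ℝ) : ℂ) + (L.im : ℂ) * Complex.I := by
    rw [← hlog, Complex.re_add_im]
  have hF : F = ((A / (2 * π ^ 2) + (-(1 / 4 * catalanConst / π) + (1 / 2 ^ 3 * (3 / 4 * A)) / (2 * π ^ 2)
      - (1 / 4) ^ 2 * (Real.log 2 / 2)) : ℝ) : ℂ) +
      ((π * (1 / 4) ^ 3 / 3 - 1 / 4 * (1 / 2 ^ 2 * E) / π - B / (2 * π ^ 2) - (1 / 4) ^ 2 * L.im : ℝ) : ℂ) * Complex.I := by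
    have hpi : (π : ℂ) ≠ 0 := by exact_mod_cast Real.pi_ne_zero
    rw [hL] at hm
    rw [sub_eq_iff_eq_add] at hm
    rw [hm]
    push_cast
    have hI : (1 : ℂ) / (π * Complex.I) = -Complex.I / π := by
      rw [div_eq_div_iff (by simp [hpi]) hpi]
      linear_combination (π : ℂ) * Complex.I_sq
    rw [div_eq_mul_one_div _ (π * Complex.I : ℂ), hI]
    field_simp
    ring_nf
    simp only [Complex.I_sq]
    ring_nf
  have hre := congrArg Complex.re hF
  simp only [Complex.add_re, Complex.re_ofReal_mul, Complex.ofReal_re, Complex.I_re, mul_zero,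
    add_zero] at hre
  rw [hre]
  push_cast
  have hpi : (π : ℂ) ≠ 0 := by exact_mod_cast Real.pi_ne_zero
  field_simp
  ring
end
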